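/- Let n ≥ 2, let Ω ⊂ ℝⁿ be a domain (bounded connected open set), let F ∈ C⁰(Ω × ℝ × ℝⁿ × S^{n×n}) be degenerate elliptic, let E ⊂ Ω be a smooth closed embedded submanifold of dimension k with 0 ≤ k ≤ n − 2, and let f ∈ USC(Ω). Assume u ∈ LSC(Ω ∖ E) satisfies inf_{Ω∖E} u > −∞, satisfies λ₁(∇²u) + ⋯ + λ_{k+2}(∇²u) ≤ 0 in Ω ∖ E in the viscosity sense (λ₁(M) ≤ ⋯ ≤ λₙ(M) the eigenvalues of M in non-decreasing order), and satisfies F(x, u, ∇u, ∇²u) ≤ f(x) in Ω ∖ E in the viscosity sense. Then, after extending u to E by u(x) := liminf_{y → x, y ∈ Ω∖E} u(y), one has F(x, u, ∇u, ∇²u) ≤ f(x) in all of Ω in the viscosity sense. -/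

import Mathlib

open Set Metric

noncomputable section

/-- ℝⁿ, realized as Euclidean space on `Fin n`. -/
abbrev En (n : ℕ) := EuclideanSpace ℝ (Fin n)

/-- The Hessian matrix `∇²φ(x)` of a real-valued function on ℝⁿ. -/
noncomputable def hess {n : ℕ} (φ : En n → ℝ) (x : En n) : Matrix (Fin n) (Fin n) ℝ :=
  Matrix.of fun i j =>
    iteratedFDeriv ℝ 2 φ x ![EuclideanSpace.single i 1, EuclideanSpace.single j 1]

/-- `u` satisfies `F(x, u, ∇u, ∇²u) ≤ f(x)` in the open set `O` in the viscosity sense: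
for every test function `φ ∈ C²(O)` and every `x₀ ∈ O` at which `u - φ` attains a local
minimum with `u x₀ = φ x₀`, one has `F(x₀, φ(x₀), ∇φ(x₀), ∇²φ(x₀)) ≤ f(x₀)`. -/
def IsViscositySupersolution {n : ℕ}
    (F : En n → ℝ → En n → Matrix (Fin n) (Fin n) ℝ → ℝ)
    (f : En n → ℝ) (O : Set (En n)) (u : En n → ℝ) : Prop :=
  ∀ φ : En n → ℝ, ContDiffOn ℝ 2 φ O → ∀ x₀ ∈ O, u x₀ = φ x₀ →
    IsLocalMinOn (fun x => u x - φ x) O x₀ →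
    F x₀ (φ x₀) (gradient φ x₀) (hess φ x₀) ≤ f x₀

/-- `F` is degenerate elliptic: `F(x,s,p,M+N) ≥ F(x,s,p,M)` for all arguments and all
positive definite symmetric `N`. -/
def DegenerateElliptic {n : ℕ} (Ω : Set (En n))
    (F : En n → ℝ → En n → Matrix (Fin n) (Fin n) ℝ → ℝ) : Prop :=
  ∀ x ∈ Ω, ∀ (s : ℝ) (p : En n) (M N : Matrix (Fin n) (Fin n) ℝ),
    N.PosDef → F x s p M ≤ F x s p (M + N)

/-- `E` is a smooth (C^∞) closed (compact, boundaryless) embedded `k`-dimensional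
submanifold of ℝⁿ: `E` is compact and near each of its points there is a smooth chart
straightening `E` onto the coordinate subspace `{z : z_i = 0 for i ≥ k}`. -/
def IsSmoothClosedSubmanifold {n : ℕ} (k : ℕ) (E : Set (En n)) : Prop :=
  IsCompact E ∧
  ∀ x ∈ E, ∃ (U V : Set (En n)) (φ ψ : En n → En n),
    IsOpen U ∧ IsOpen V ∧ x ∈ U ∧
    ContDiffOn ℝ (⊤ : ℕ∞) φ U ∧ ContDiffOn ℝ (⊤ : ℕ∞) ψ V ∧
    Set.MapsTo φ U V ∧ Set.MapsTo ψ V U ∧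
    (∀ y ∈ U, ψ (φ y) = y) ∧ (∀ z ∈ V, φ (ψ z) = z) ∧
    φ '' (E ∩ U) = V ∩ {z : En n | ∀ i : Fin n, k ≤ (i : ℕ) → z i = 0}

/-- The eigenvalues of a symmetric matrix, listed in non-decreasing order
`λ₁(M) ≤ ⋯ ≤ λₙ(M)` (junk value `0` for non-symmetric matrices). -/
noncomputable def sortedEigs {n : ℕ} (M : Matrix (Fin n) (Fin n) ℝ) : Fin n → ℝ :=
  if h : M.IsHermitian then h.eigenvalues ∘ Tuple.sort h.eigenvalues else fun _ => 0

/-- `λ₁(M) + ⋯ + λ_m(M)`, the sum of the `m` smallest eigenvalues of a symmetric matrix. -/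
noncomputable def sumSmallestEigs {n : ℕ} (m : ℕ) (M : Matrix (Fin n) (Fin n) ℝ) : ℝ :=
  ∑ i : Fin n, if (i : ℕ) < m then sortedEigs M i else 0

open Classical in
/-- The extension of `u` from `Ω \ E` to `E` by `u(x) := liminf_{y → x, y ∈ Ω \ E} u(y)`,
with values in the extended reals. -/
noncomputable def liminfExtension {n : ℕ} (Ω E : Set (En n)) (u : En n → ℝ) :
    En n → EReal :=
  fun x => if x ∈ E then Filter.liminf (fun y => (u y : EReal)) (nhdsWithin x (Ω \ E))
    else (u x : EReal)

/-- Viscosity supersolution, for an extended-real-valued function `v`: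
for every test function `φ ∈ C²(O)` and every `x₀ ∈ O` at which `v - φ` attains a local
minimum with `v x₀ = φ x₀`, one has `F(x₀, φ(x₀), ∇φ(x₀), ∇²φ(x₀)) ≤ f(x₀)`. -/
def ERealIsViscositySupersolution {n : ℕ}
    (F : En n → ℝ → En n → Matrix (Fin n) (Fin n) ℝ → ℝ)
    (f : En n → ℝ) (O : Set (En n)) (v : En n → EReal) : Prop :=
  ∀ φ : En n → ℝ, ContDiffOn ℝ 2 φ O → ∀ x₀ ∈ O, v x₀ = (φ x₀ : EReal) →
    (∀ᶠ x in nhdsWithin x₀ O, (φ x : EReal) ≤ v x) →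
    F x₀ (φ x₀) (gradient φ x₀) (hess φ x₀) ≤ f x₀


open Filter Topology

/-- Second derivative as a bilinear form. -/
def D2 {n : ℕ} (g : En n → ℝ) (x v w : En n) : ℝ := iteratedFDeriv ℝ 2 g x ![v, w]

lemma D2_eq {n : ℕ} (g : En n → ℝ) (x v w : En n) :
    D2 g x v w = fderiv ℝ (fderiv ℝ g) x v w := by
  simp [D2, iteratedFDeriv_two_apply]

lemma hess_apply {n : ℕ} (g : En n → ℝ) (x : En n) (i j : Fin n) :
    hess g x i j = D2 g x (EuclideanSpace.single i 1) (EuclideanSpace.single j 1) := rfl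

lemma hess_isHermitian {n : ℕ} {g : En n → ℝ} {x : En n} (hg : ContDiffAt ℝ 2 g x) :
    (hess g x).IsHermitian := by
  ext i j
  have := hg.isSymmSndFDerivAt (by simp)
  simp only [Matrix.conjTranspose_apply, hess_apply, D2_eq]
  simpa using this _ _

lemma hess_quad {n : ℕ} (g : En n → ℝ) (x v w : En n) :
    v.ofLp ⬝ᵥ (hess g x).mulVec w.ofLp = D2 g x v w := by
  have key : ∀ z : En n, z = ∑ i, z i • EuclideanSpace.single i (1:ℝ) := by
    intro z
    ext j
    simp [Finset.sum_apply, Pi.single_apply]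
  rw [D2_eq]
  conv_rhs => rw [key v, key w]
  simp only [map_sum, map_smul, sum_apply, smul_apply,
    dotProduct, Matrix.mulVec, hess_apply, D2_eq, smul_eq_mul, Finset.mul_sum]
  rw [Finset.sum_comm]
  refine Finset.sum_congr rfl fun i _ => Finset.sum_congr rfl fun j _ => by ring

lemma exists_frame {n m : ℕ} (hm : m ≤ n) (M : Matrix (Fin n) (Fin n) ℝ) (hM : M.IsHermitian)
    (h : sumSmallestEigs m M ≤ 0) :
    ∃ v : Fin m → En n, Orthonormal ℝ v ∧
      ∑ i, (v i).ofLp ⬝ᵥ M.mulVec (v i).ofLp ≤ 0 := by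
  refine ⟨fun i => hM.eigenvectorBasis (Tuple.sort hM.eigenvalues (Fin.castLE hm i)), ?_, ?_⟩
  · exact hM.eigenvectorBasis.orthonormal.comp _
      ((Equiv.injective _).comp (Fin.castLE_injective hm))
  · refine le_trans (le_of_eq ?_) h
    unfold sumSmallestEigs sortedEigs
    rw [dif_pos hM, ← Finset.sum_filter]
    symm
    refine Finset.sum_bij' (fun i hi => ⟨i, (Finset.mem_filter.1 hi).2⟩)
      (fun i _ => Fin.castLE hm i) ?_ ?_ ?_ ?_ ?_
    · simp
    · simp
    · intro a ha; ext; simp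
    · intro a ha; ext; simp
    · intro a ha
      rw [hM.mulVec_eigenvectorBasis]
      have h1 := hM.eigenvectorBasis.orthonormal.1
        (Tuple.sort hM.eigenvalues a)
      have h2 : (hM.eigenvectorBasis (Tuple.sort hM.eigenvalues a)).ofLp ⬝ᵥ
          (hM.eigenvectorBasis (Tuple.sort hM.eigenvalues a)).ofLp = 1 := by
        have := EuclideanSpace.real_norm_sq_eq (hM.eigenvectorBasis (Tuple.sort hM.eigenvalues a))
        rw [h1] at this
        simp only [dotProduct]
        rw [one_pow] at this
        rw [this]
        exact Finset.sum_congr rfl fun i _ => by ring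
      simp only [Function.comp, dotProduct_smul, smul_eq_mul]
      simp only [Fin.castLE_mk, Fin.eta, h2, mul_one]

lemma touch {n : ℕ} {Ω E : Set (En n)} {u : En n → ℝ} (hu : LowerSemicontinuousOn u (Ω \ E))
    {x₀ : En n} {R : ℝ} (hB : closedBall x₀ R ⊆ Ω)
    {θ h : En n → ℝ} (hθ : ContinuousOn θ (closedBall x₀ R))
    (hh : ContinuousOn h (closedBall x₀ R))
    (hle : ∀ x ∈ closedBall x₀ R \ E, h x ≤ u x - θ x)
    (hE : ∀ x ∈ closedBall x₀ R ∩ E, 0 ≤ h x)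
    (hS : ∀ x ∈ sphere x₀ R, 0 ≤ h x) :
    (∀ x ∈ closedBall x₀ R \ E, θ x ≤ u x) ∨
    ∃ y ∈ ball x₀ R \ E, u y - θ y < 0 ∧ ∀ x ∈ closedBall x₀ R \ E, u y - θ y ≤ u x - θ x := by
  by_contra hcon
  push Not at hcon
  obtain ⟨⟨z, hz, hzu⟩, hcon⟩ := hcon
  set m := u z - θ z with hm
  have hm0 : m < 0 := by linarith
  set K := closedBall x₀ R ∩ h ⁻¹' (Iic m) with hK
  have hKc : IsCompact K :=
    (isCompact_closedBall x₀ R).of_isClosed_subset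
      (hh.preimage_isClosed_of_isClosed isClosed_closedBall isClosed_Iic) inter_subset_left
  have hKE : ∀ x ∈ K, x ∉ E := by
    intro x hx hxE
    have := hE x ⟨hx.1, hxE⟩
    have h2 : h x ≤ m := hx.2
    linarith
  have hKs : K ⊆ Ω \ E := fun x hx => ⟨hB hx.1, hKE x hx⟩
  have hzK : z ∈ K := ⟨hz.1, hle z hz⟩
  have hl : LowerSemicontinuousOn (fun x => u x - θ x) K := by
    have h1 : LowerSemicontinuousOn u K := hu.mono hKs
    have h2 : LowerSemicontinuousOn (fun x => - θ x) K :=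
      ((hθ.mono inter_subset_left).neg).lowerSemicontinuousOn
    simpa [sub_eq_add_neg] using h1.add h2
  obtain ⟨y, hyK, hy⟩ := hl.exists_isMinOn ⟨z, hzK⟩ hKc
  have hyz : u y - θ y ≤ m := hy hzK
  have hyb : y ∈ ball x₀ R := by
    have h1 : dist y x₀ ≤ R := hyK.1
    rcases h1.lt_or_eq with h1 | h1
    · exact h1
    · have := hS y h1
      have h2 : h y ≤ m := hyK.2
      linarith
  obtain ⟨x, hx, hxy⟩ := hcon y ⟨hyb, hKE y hyK⟩ (by linarith)
  have : x ∈ K := ⟨hx.1, by have := hle x hx; show h x ≤ m; linarith⟩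
  have : u y - θ y ≤ u x - θ x := hy this
  linarith

lemma perturb {n : ℕ} {ι : Type*} [Fintype ι] {Ω : Set (En n)} (hΩopen : IsOpen Ω)
    {F : En n → ℝ → En n → Matrix (Fin n) (Fin n) ℝ → ℝ}
    (hFcont : ContinuousOn
      (fun q : En n × ℝ × En n × Matrix (Fin n) (Fin n) ℝ => F q.1 q.2.1 q.2.2.1 q.2.2.2)
      {q | q.1 ∈ Ω})
    {f : En n → ℝ} (hf : UpperSemicontinuousOn f Ω)
    {φ : En n → ℝ} (hφ : ContDiffOn ℝ 2 φ Ω) {q : ι → En n → ℝ} (hq : ∀ j, ContDiff ℝ 2 (q j))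
    {x₀ : En n} (hx₀ : x₀ ∈ Ω)
    (hlt : f x₀ < F x₀ (φ x₀) (gradient φ x₀) (hess φ x₀)) :
    ∃ ε > 0, ∀ a : ι → ℝ, ‖a‖ < ε → ∀ y ∈ ball x₀ ε,
      f y < F y (φ y + ∑ j, a j * q j y)
        (gradient (fun x => φ x + ∑ j, a j * q j x) y)
        (hess (fun x => φ x + ∑ j, a j * q j x) y) := by
  have hφ' : ∀ y ∈ Ω, ContDiffAt ℝ 2 φ y := fun y hy => hφ.contDiffAt (hΩopen.mem_nhds hy)
  have hgrad : ∀ (a : ι → ℝ), ∀ y ∈ Ω, gradient (fun x => φ x + ∑ j, a j * q j x) y =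
      gradient φ y + ∑ j, a j • gradient (q j) y := by
    intro a y hy
    unfold gradient
    have h1 : DifferentiableAt ℝ φ y := (hφ' y hy).differentiableAt (by simp)
    have h2 : ∀ j, HasFDerivAt (q j) (fderiv ℝ (q j) y) y :=
      fun j => ((hq j).differentiable (by simp) y).hasFDerivAt
    have h3 : HasFDerivAt (fun x => φ x + ∑ j, a j * q j x)
        (fderiv ℝ φ y + ∑ j, a j • fderiv ℝ (q j) y) y :=
      h1.hasFDerivAt.add (HasFDerivAt.fun_sum fun j _ => (h2 j).const_mul (a j))
    rw [h3.fderiv]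
    simp [map_sum]
  have hhess : ∀ (a : ι → ℝ), ∀ y ∈ Ω, hess (fun x => φ x + ∑ j, a j * q j x) y =
      hess φ y + ∑ j, a j • hess (q j) y := by
    intro a y hy
    have h2 : ∀ j, ContDiffAt ℝ 2 (q j) y := fun j => (hq j).contDiffAt
    have h3 : ∀ j, ContDiffAt ℝ 2 (a j • q j) y := fun j => (h2 j).const_smul (a j)
    have h4 : (fun x => φ x + ∑ j, a j * q j x) = φ + ∑ j, a j • q j := by
      ext x; simp
    ext i j
    rw [h4]
    simp only [hess, Matrix.of_apply, Matrix.add_apply, Matrix.sum_apply, Matrix.smul_apply]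
    rw [iteratedFDeriv_add_apply (i := 2) (hφ' y hy)
      (by rw [show (∑ j, a j • q j) = fun x => ∑ j, (a j • q j) x by ext; simp]
          exact ContDiffAt.sum fun j _ => h3 j),
      iteratedFDeriv_sum_apply (n := 2) (fun j _ => h3 j)]
    have h5 : ∀ j, iteratedFDeriv ℝ 2 (a j • q j) y = a j • iteratedFDeriv ℝ 2 (q j) y :=
      fun j => iteratedFDeriv_const_smul_apply (i := 2) (h2 j)
    simp [h5, sum_apply]
  have cgrad : ∀ g : En n → ℝ, ContDiffAt ℝ 2 g x₀ → ContinuousAt (gradient g) x₀ := by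
    intro g hg
    unfold gradient
    have : ContinuousAt (fderiv ℝ g) x₀ :=
      (hg.fderiv_right (m := 0) (by norm_num)).continuousAt
    exact (LinearIsometryEquiv.continuous _).continuousAt.comp this
  have chess : ∀ g : En n → ℝ, ContDiffAt ℝ 2 g x₀ → ContinuousAt (hess g) x₀ := by
    intro g hg
    have : ContinuousAt (iteratedFDeriv ℝ 2 g) x₀ := hg.continuousAt_iteratedFDeriv (by simp)
    refine continuousAt_pi.2 fun i => continuousAt_pi.2 fun j => ?_
    exact (ContinuousMultilinearMap.apply ℝ _ ℝ _).continuous.continuousAt.comp this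
  set T : (ι → ℝ) × En n → En n × ℝ × En n × Matrix (Fin n) (Fin n) ℝ := fun z =>
    (z.2, φ z.2 + ∑ j, z.1 j * q j z.2, gradient φ z.2 + ∑ j, z.1 j • gradient (q j) z.2,
      hess φ z.2 + ∑ j, z.1 j • hess (q j) z.2) with hT
  have hs : ∀ {X : Type} [TopologicalSpace X] {g : En n → X}, ContinuousAt g x₀ →
      ContinuousAt (fun z : (ι → ℝ) × En n => g z.2) (0, x₀) := by
    intro X _ g hg
    exact ContinuousAt.comp (f := Prod.snd) (by exact hg) continuousAt_snd
  have ha : ∀ j, ContinuousAt (fun z : (ι → ℝ) × En n => z.1 j) (0, x₀) := by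
    intro j; fun_prop
  have hsum : ∀ {X : Type} [AddCommGroup X] [Module ℝ X] [TopologicalSpace X]
      [ContinuousSMul ℝ X] [IsTopologicalAddGroup X] (g : ι → En n → X),
      (∀ j, ContinuousAt (g j) x₀) →
      ContinuousAt (fun z : (ι → ℝ) × En n => ∑ j, z.1 j • g j z.2) (0, x₀) := by
    intro X _ _ _ _ _ g hg
    exact tendsto_finsetSum _ fun j _ => (ha j).smul (hs (hg j))
  have hTc : ContinuousAt T (0, x₀) := by
    have c0 := hs (hφ' x₀ hx₀).continuousAt
    have c1 := hsum (fun j => q j) (fun j => (hq j).continuous.continuousAt)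
    have c2 := hs (cgrad φ (hφ' x₀ hx₀))
    have c3 := hsum (fun j => gradient (q j)) (fun j => cgrad _ (hq j).contDiffAt)
    have c4 := hs (chess φ (hφ' x₀ hx₀))
    have c5 := hsum (fun j => hess (q j)) (fun j => chess _ (hq j).contDiffAt)
    exact continuousAt_snd.prodMk ((c0.add c1).prodMk ((c2.add c3).prodMk (c4.add c5)))
  have hT0 : T (0, x₀) = (x₀, φ x₀, gradient φ x₀, hess φ x₀) := by simp [hT]
  obtain ⟨μ, hμ1, hμ2⟩ := exists_between hlt
  have hFc : ContinuousAt (fun q : En n × ℝ × En n × Matrix (Fin n) (Fin n) ℝ =>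
      F q.1 q.2.1 q.2.2.1 q.2.2.2) (T (0, x₀)) := by
    refine hFcont.continuousAt ((hΩopen.preimage continuous_fst).mem_nhds ?_)
    simpa [hT0] using hx₀
  have hcomp := ContinuousAt.comp hFc hTc
  have e1 : ∀ᶠ z in 𝓝 ((0 : ι → ℝ), x₀), μ < F (T z).1 (T z).2.1 (T z).2.2.1 (T z).2.2.2 := by
    refine hcomp.eventually (lt_mem_nhds ?_)
    simpa [hT0] using hμ2
  have e2 : ∀ᶠ y in 𝓝 x₀, f y < μ := by
    have := hf x₀ hx₀ μ hμ1
    rwa [hΩopen.nhdsWithin_eq hx₀] at this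
  have e3 : ∀ᶠ y in 𝓝 x₀, y ∈ Ω := hΩopen.mem_nhds hx₀
  have e4 := e1.and ((continuousAt_snd (p := ((0 : ι → ℝ), x₀))).eventually (e2.and e3))
  obtain ⟨ε, hε, h⟩ := Metric.eventually_nhds_iff_ball.1 e4
  refine ⟨ε, hε, fun a ha y hy => ?_⟩
  have hm : ((a, y) : (ι → ℝ) × En n) ∈ ball ((0 : ι → ℝ), x₀) ε := by
    rw [← ball_prod_same]
    exact ⟨by simpa using ha, hy⟩
  obtain ⟨h1, h2, h3⟩ := h _ hm
  rw [hgrad a y h3, hhess a y h3]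
  exact lt_trans h2 h1

lemma chart_normal {n k : ℕ} {E : Set (En n)} (hE : IsSmoothClosedSubmanifold k E)
    {x₀ : En n} (hx₀ : x₀ ∈ E) :
    ∃ (Φ : Fin n → En n → ℝ) (ρ : ℝ), 0 < ρ ∧ (∀ j, ContDiff ℝ 2 (Φ j)) ∧
      (∀ y ∈ closedBall x₀ ρ ∩ E, ∀ j, Φ j y = 0) ∧
      ∀ v : Fin (k + 2) → En n, LinearIndependent ℝ v →
        ∃ i j, fderiv ℝ (Φ j) x₀ (v i) ≠ 0 := by
  obtain ⟨U, V, φ, ψ, hU, hV, hxU, hφ, hψ, hUV, hVU, hψφ, hφψ, him⟩ := hE.2 x₀ hx₀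
  obtain ⟨r, hr, hrU⟩ := Metric.nhds_basis_closedBall.mem_iff.1 (hU.mem_nhds hxU)
  let χ : ContDiffBump x₀ := ⟨r / 2, r, by positivity, by linarith⟩
  have hφx : ∀ y ∈ U, ContDiffAt ℝ 2 φ y := fun y hy =>
    (hφ.contDiffAt (hU.mem_nhds hy)).of_le
      (show ((2 : ℕ∞) : WithTop ℕ∞) ≤ ((⊤ : ℕ∞) : WithTop ℕ∞) from WithTop.coe_le_coe.2 le_top)
  have hχ1 : ∀ᶠ y in 𝓝 x₀, χ y = 1 := χ.eventuallyEq_one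
  refine ⟨fun j y => if (j : ℕ) < k then 0 else χ y * φ y j, r, hr, ?_, ?_, ?_⟩
  · intro j
    by_cases hj : (j : ℕ) < k
    · simp only [hj, if_true]; exact contDiff_const
    · simp only [hj, if_false]
      rw [contDiff_iff_contDiffAt]
      intro y
      by_cases hy : y ∈ U
      · refine χ.contDiff.contDiffAt.mul ?_
        exact (contDiffAt_piLp 2).1 (hφx y hy) j
      · have : ∀ᶠ z in 𝓝 y, χ z * φ z j = 0 := by
          have h1 : y ∈ (tsupport χ)ᶜ := by
            rw [χ.tsupport_eq]; exact fun h => hy (hrU h)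
          filter_upwards [(isClosed_tsupport _).isOpen_compl.mem_nhds h1] with z hz
          rw [image_eq_zero_of_notMem_tsupport hz, zero_mul]
        exact (contDiffAt_const (c := (0:ℝ))).congr_of_eventuallyEq this
  · rintro y ⟨hy, hyE⟩ j
    by_cases hj : (j : ℕ) < k
    · simp [hj]
    · simp only [hj, if_false]
      have : φ y ∈ φ '' (E ∩ U) := ⟨y, ⟨hyE, hrU hy⟩, rfl⟩
      rw [him] at this
      rw [this.2 j (not_lt.1 hj), mul_zero]
  · intro v hv
    by_contra hcon
    push Not at hcon
    have hd : DifferentiableAt ℝ φ x₀ := (hφx x₀ hxU).differentiableAt (by simp)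
    have hdψ : DifferentiableAt ℝ ψ (φ x₀) :=
      (hψ.contDiffAt (hV.mem_nhds (hUV hxU))).differentiableAt (by simp)
    set D := fderiv ℝ φ x₀ with hD
    have hinj : Function.Injective D := by
      have h1 : HasFDerivAt (ψ ∘ φ) ((fderiv ℝ ψ (φ x₀)).comp D) x₀ :=
        hdψ.hasFDerivAt.comp x₀ hd.hasFDerivAt
      have h2 : HasFDerivAt (ψ ∘ φ) (ContinuousLinearMap.id ℝ (En n)) x₀ :=
        (hasFDerivAt_id x₀).congr_of_eventuallyEq (by
          filter_upwards [hU.mem_nhds hxU] with y hy using hψφ y hy)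
      have h3 := h1.unique h2
      intro a b hab
      have ha := DFunLike.congr_fun h3 a
      have hb := DFunLike.congr_fun h3 b
      simp only [ContinuousLinearMap.comp_apply, ContinuousLinearMap.id_apply] at ha hb
      rw [← ha, ← hb, hab]
    have hz : ∀ i, ∀ j : Fin n, k ≤ (j : ℕ) → D (v i) j = 0 := by
      intro i j hj
      have h0 := hcon i j
      have h1 : HasFDerivAt (fun y => φ y j) ((EuclideanSpace.proj j).comp D) x₀ :=
        (EuclideanSpace.proj (𝕜 := ℝ) j).hasFDerivAt.comp x₀ hd.hasFDerivAt
      have h2 : HasFDerivAt (fun y => if (j : ℕ) < k then 0 else χ y * φ y j)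
          ((EuclideanSpace.proj j).comp D) x₀ := by
        refine h1.congr_of_eventuallyEq ?_
        filter_upwards [hχ1] with y hy
        simp [not_lt.2 hj, hy]
      rw [h2.fderiv] at h0
      simpa using h0
    have hli : LinearIndependent ℝ (fun i => D (v i)) :=
      hv.map' D.toLinearMap (LinearMap.ker_eq_bot.2 hinj)
    let P : En n →ₗ[ℝ] (Fin k → ℝ) :=
      { toFun := fun z i => if h : (i : ℕ) < n then z ⟨i, h⟩ else 0
        map_add' := by intro a b; ext i; by_cases h : (i : ℕ) < n <;> simp [h]
        map_smul' := by intro a b; ext i; by_cases h : (i : ℕ) < n <;> simp [h] }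
    have hli2 : LinearIndependent ℝ (fun i => P (D (v i))) := by
      rw [Fintype.linearIndependent_iff] at hli ⊢
      intro c hc
      refine hli c ?_
      ext j
      by_cases hj : (j : ℕ) < k
      · have := congrFun hc ⟨j, hj⟩
        simpa [P, Finset.sum_apply] using this
      · simp [hz _ j (not_lt.1 hj)]
    have := hli2.fintype_card_le_finrank
    simp at this

lemma chart_param {n k : ℕ} {E : Set (En n)} (hE : IsSmoothClosedSubmanifold k E)
    {x₀ : En n} (hx₀ : x₀ ∈ E) :
    ∃ (G : (Fin k → ℝ) → En n) (ρ b L : ℝ), 0 < ρ ∧ 0 < b ∧ 0 ≤ L ∧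
      (∀ w ∈ closedBall (0 : Fin k → ℝ) (3 * b), G w ∈ E) ∧
      (∀ w ∈ closedBall (0 : Fin k → ℝ) (3 * b), ∀ w' ∈ closedBall (0 : Fin k → ℝ) (3 * b),
        ‖G w - G w'‖ ≤ L * ‖w - w'‖) ∧
      (∀ y ∈ closedBall x₀ ρ ∩ E, ∃ w ∈ closedBall (0 : Fin k → ℝ) b, G w = y) := by
  obtain ⟨U, V, φ, ψ, hU, hV, hxU, hφ, hψ, hUV, hVU, hψφ, hφψ, him⟩ := hE.2 x₀ hx₀
  have hφE : ∀ y ∈ E ∩ U, φ y ∈ V ∩ {z : En n | ∀ i : Fin n, k ≤ (i : ℕ) → z i = 0} := by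
    intro y hy; rw [← him]; exact ⟨y, hy, rfl⟩
  set z₀ := φ x₀ with hz₀
  have hz₀E : z₀ ∈ V ∩ {z : En n | ∀ i : Fin n, k ≤ (i : ℕ) → z i = 0} := hφE x₀ ⟨hx₀, hxU⟩
  obtain ⟨L, t, ht, hLip⟩ := ((hψ.contDiffAt (hV.mem_nhds hz₀E.1)).of_le
    (show (1 : WithTop ℕ∞) ≤ _ by exact_mod_cast le_top)).exists_lipschitzOnWith
  let I₀ : (Fin k → ℝ) →ₗ[ℝ] En n :=
      { toFun := fun w => WithLp.toLp 2 fun i => if h : (i : ℕ) < k then w ⟨i, h⟩ else 0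
        map_add' := by intro a b; ext i; by_cases h : (i : ℕ) < k <;> simp [h]
        map_smul' := by intro a b; ext i; by_cases h : (i : ℕ) < k <;> simp [h] }
  let I : (Fin k → ℝ) →L[ℝ] En n := LinearMap.toContinuousLinearMap I₀
  have hI : ∀ w i, I w i = if h : (i : ℕ) < k then w ⟨i, h⟩ else 0 := fun w i => rfl
  have hnb : ∀ᶠ w in 𝓝 (0 : Fin k → ℝ), z₀ + I w ∈ t ∩ V := by
    have hc : ContinuousAt (fun w => z₀ + I w) 0 := by fun_prop
    refine hc.eventually_mem ?_
    simpa using inter_mem ht (hV.mem_nhds hz₀E.1)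
  obtain ⟨s, hs, hsub⟩ := Metric.nhds_basis_closedBall.mem_iff.1 hnb
  have hcont : ContinuousAt φ x₀ := hφ.continuousOn.continuousAt (hU.mem_nhds hxU)
  have hnear : ∀ᶠ y in 𝓝 x₀, y ∈ U ∧ dist (φ y) z₀ < s / 3 :=
    (show ∀ᶠ y in 𝓝 x₀, y ∈ U from hU.mem_nhds hxU).and (hcont.eventually (ball_mem_nhds _ (by positivity)))
  obtain ⟨ρ, hρ, hρs⟩ := Metric.nhds_basis_closedBall.mem_iff.1 hnear
  refine ⟨fun w => ψ (z₀ + I w), ρ, s / 3, L * ‖I‖, hρ, by positivity, by positivity, ?_, ?_, ?_⟩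
  · intro w hw
    rw [show 3 * (s / 3) = s by ring] at hw
    have h1 : z₀ + I w ∈ φ '' (E ∩ U) := by
      rw [him]
      refine ⟨(hsub hw).2, fun i hi => ?_⟩
      have := hI w i
      rw [dif_neg (not_lt.2 hi)] at this
      simp [this, hz₀E.2 i hi]
    obtain ⟨e, he, hee⟩ := h1
    show ψ (z₀ + I w) ∈ E
    rw [← hee, hψφ e he.2]; exact he.1
  · intro w hw w' hw'
    rw [show 3 * (s / 3) = s by ring] at hw hw'
    have h1 := hLip.norm_sub_le (hsub hw).1 (hsub hw').1
    have h2 : z₀ + I w - (z₀ + I w') = I (w - w') := by rw [map_sub]; abel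
    rw [h2] at h1
    calc _ ≤ _ := h1
      _ ≤ L * (‖I‖ * ‖w - w'‖) := by gcongr; exact I.le_opNorm _
      _ = _ := by ring
  · rintro y ⟨hy, hyE⟩
    obtain ⟨hyU, hyd⟩ := hρs hy
    have h1 := hφE y ⟨hyE, hyU⟩
    let w : Fin k → ℝ := fun i => if h : (i : ℕ) < n then φ y ⟨i, h⟩ - z₀ ⟨i, h⟩ else 0
    have hw : z₀ + I w = φ y := by
      ext i
      rw [PiLp.add_apply, hI]
      by_cases h : (i : ℕ) < k
      · simp [h, w]
      · simp [h, hz₀E.2 i (not_lt.1 h), h1.2 i (not_lt.1 h)]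
    refine ⟨w, ?_, ?_⟩
    · rw [mem_closedBall_zero_iff, pi_norm_le_iff_of_nonneg (by positivity)]
      intro i
      by_cases h : (i : ℕ) < n
      · simp only [w, h, dif_pos]
        have := PiLp.norm_apply_le (φ y - z₀) ⟨i, h⟩
        rw [dist_eq_norm] at hyd
        exact this.trans hyd.le
      · simp only [w, h, dif_neg, not_false_iff, norm_zero]; positivity
    · show ψ (z₀ + I w) = y
      rw [hw, hψφ y hyU]

/-- `-ψ` is `(k+2)`-convex. -/
def Adm {n : ℕ} (k : ℕ) (ψ : En n → ℝ) : Prop :=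
  ContDiff ℝ 2 ψ ∧ ∀ (x : En n) (v : Fin (k + 2) → En n), Orthonormal ℝ v →
    ∑ i, D2 ψ x (v i) (v i) ≤ 0

lemma D2_const_mul {n : ℕ} {g : En n → ℝ} {x : En n} (hg : ContDiffAt ℝ 2 g x) (c : ℝ)
    (v w : En n) : D2 (fun x => c * g x) x v w = c * D2 g x v w := by
  have : (fun x => c * g x) = c • g := by ext; simp
  unfold D2
  rw [this, iteratedFDeriv_const_smul_apply (i := 2) hg]
  simp

lemma D2_add {n : ℕ} {g h : En n → ℝ} {x : En n} (hg : ContDiffAt ℝ 2 g x)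
    (hh : ContDiffAt ℝ 2 h x) (v w : En n) :
    D2 (fun x => g x + h x) x v w = D2 g x v w + D2 h x v w := by
  have : (fun x => g x + h x) = g + h := by ext; simp
  unfold D2
  rw [this, iteratedFDeriv_add_apply (i := 2) hg hh]
  simp

lemma D2_sum {n : ℕ} {ι : Type*} {s : Finset ι} {g : ι → En n → ℝ} {x : En n}
    (hg : ∀ j ∈ s, ContDiffAt ℝ 2 (g j) x) (v w : En n) :
    D2 (fun x => ∑ j ∈ s, g j x) x v w = ∑ j ∈ s, D2 (g j) x v w := by
  unfold D2
  rw [iteratedFDeriv_fun_sum_apply (n := 2) hg]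
  simp [sum_apply]

lemma Adm.const_mul {n k : ℕ} {ψ : En n → ℝ} (h : Adm k ψ) {c : ℝ} (hc : 0 ≤ c) :
    Adm k (fun x => c * ψ x) := by
  refine ⟨contDiff_const.mul h.1, fun x v hv => ?_⟩
  simp only [D2_const_mul h.1.contDiffAt]
  rw [← Finset.mul_sum]
  exact mul_nonpos_of_nonneg_of_nonpos hc (h.2 x v hv)

lemma Adm.sum {n k : ℕ} {ι : Type*} {s : Finset ι} {ψ : ι → En n → ℝ}
    (h : ∀ j ∈ s, Adm k (ψ j)) : Adm k (fun x => ∑ j ∈ s, ψ j x) := by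
  refine ⟨ContDiff.sum fun j hj => (h j hj).1, fun x v hv => ?_⟩
  simp only [D2_sum (fun j hj => (h j hj).1.contDiffAt)]
  rw [Finset.sum_comm]
  exact Finset.sum_nonpos fun j hj => (h j hj).2 x v hv

lemma D2_radial {n : ℕ} {l l1 l2 : ℝ → ℝ} (h1 : ∀ s, 0 ≤ s → HasDerivAt l (l1 s) s)
    (h2 : ∀ s, 0 ≤ s → HasDerivAt l1 (l2 s) s) (x y v : En n) :
    D2 (fun z => l (‖z - y‖ ^ 2)) x v v =
      4 * l2 (‖x - y‖ ^ 2) * (inner ℝ (v) (x - y)) ^ 2 + 2 * l1 (‖x - y‖ ^ 2) * ‖v‖ ^ 2 := by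
  have hn : ∀ z : En n, HasFDerivAt (fun z => ‖z - y‖ ^ 2) ((2:ℝ) • innerSL ℝ (z - y)) z := by
    intro z
    have := ((hasFDerivAt_id z).sub_const y).norm_sq
    refine this.congr_fderiv ?_
    rw [ContinuousLinearMap.comp_id, two_smul, two_smul]
    rfl
  have hd : fderiv ℝ (fun z => l (‖z - y‖ ^ 2)) =
      fun z => (2 * l1 (‖z - y‖ ^ 2)) • innerSL ℝ (z - y) := by
    ext1 z
    have := (h1 _ (sq_nonneg ‖z - y‖)).comp_hasFDerivAt z (hn z)
    have h3 := this.fderiv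
    rw [show (fun z => l (‖z - y‖ ^ 2)) = (l ∘ fun z => ‖z - y‖ ^ 2) from rfl, h3, smul_smul,
      mul_comm]
  rw [D2_eq, hd]
  have ha : HasFDerivAt (fun z => 2 * l1 (‖z - y‖ ^ 2))
      ((2:ℝ) • (l2 (‖x - y‖ ^ 2) • ((2:ℝ) • innerSL ℝ (x - y)))) x :=
    ((h2 _ (sq_nonneg ‖x - y‖)).comp_hasFDerivAt x (hn x)).const_mul 2
  have hb : HasFDerivAt (fun z : En n => innerSL ℝ (z - y)) (innerSL ℝ (E := En n)) x := by
    have := (innerSL ℝ (E := En n)).hasFDerivAt.comp x ((hasFDerivAt_id x).sub_const y)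
    rw [ContinuousLinearMap.comp_id] at this
    exact this
  rw [(ha.fun_smul hb).fderiv]
  simp only [add_apply, smul_apply, ContinuousLinearMap.smulRight_apply, smul_eq_mul,
    innerSL_apply_apply]
  rw [real_inner_comm v (x - y)]
  have e : (innerSL ℝ (E := En n) v) v = ‖v‖ ^ 2 := real_inner_self_eq_norm_sq v
  linear_combination 2 * l1 (‖x - y‖ ^ 2) * e

lemma adm_radial {n k : ℕ} {l l1 l2 : ℝ → ℝ} (h1 : ∀ s, 0 ≤ s → HasDerivAt l (l1 s) s)
    (h2 : ∀ s, 0 ≤ s → HasDerivAt l1 (l2 s) s) (hl2 : ∀ s, 0 ≤ s → 0 ≤ l2 s)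
    (hl : ∀ s, 0 ≤ s → 4 * l2 s * s + 2 * l1 s * (k + 2) ≤ 0) (y : En n)
    (hC : ContDiff ℝ 2 fun z : En n => l (‖z - y‖ ^ 2)) :
    Adm k (fun z : En n => l (‖z - y‖ ^ 2)) := by
  refine ⟨hC, fun x v hv => ?_⟩
  simp only [D2_radial h1 h2, hv.1, one_pow, mul_one]
  rw [Finset.sum_add_distrib, ← Finset.mul_sum]
  have hB := hv.sum_inner_products_le (x := x - y) (s := Finset.univ)
  simp only [Real.norm_eq_abs, sq_abs] at hB
  have h3 := hl _ (sq_nonneg ‖x - y‖)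
  have h4 := mul_le_mul_of_nonneg_left hB
    (mul_nonneg (by norm_num : (0:ℝ) ≤ 4) (hl2 _ (sq_nonneg ‖x - y‖)))
  simp only [Finset.sum_const, Finset.card_univ, Fintype.card_fin, nsmul_eq_mul]
  push_cast
  linarith

lemma adm_pow {n k : ℕ} {t : ℝ} (ht : 0 < t) (y : En n) :
    Adm k (fun z : En n => (‖z - y‖ ^ 2 + t) ^ (-((k : ℝ) / 2))) := by
  refine adm_radial (l := fun s => (s + t) ^ (-((k : ℝ) / 2)))
    (l1 := fun s => (-((k : ℝ) / 2)) * (s + t) ^ (-((k : ℝ) / 2) - 1))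
    (l2 := fun s => (-((k : ℝ) / 2)) * ((-((k : ℝ) / 2) - 1) * (s + t) ^ (-((k : ℝ) / 2) - 1 - 1)))
    ?_ ?_ ?_ ?_ y ?_
  · intro s hs
    have := ((hasDerivAt_id s).add_const t).rpow_const (p := -((k : ℝ) / 2))
      (Or.inl (by simp; positivity))
    simpa using this
  · intro s hs
    have := (((hasDerivAt_id s).add_const t).rpow_const (p := -((k : ℝ) / 2) - 1)
      (Or.inl (by simp; positivity))).const_mul (-((k : ℝ) / 2))
    simpa using this
  · intro s hs
    have : 0 ≤ (s + t) ^ (-((k : ℝ) / 2) - 1 - 1) := by positivity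
    have h2 : (-((k : ℝ) / 2)) * ((-((k : ℝ) / 2) - 1) * (s + t) ^ (-((k : ℝ) / 2) - 1 - 1)) =
      ((k : ℝ) / 2) * (((k : ℝ) / 2 + 1) * (s + t) ^ (-((k : ℝ) / 2) - 1 - 1)) := by ring
    simp only [h2]
    positivity
  · intro s hs
    have hp : 0 < s + t := by positivity
    have h1 : (s + t) ^ (-((k : ℝ) / 2) - 1) = (s + t) ^ (-((k : ℝ) / 2) - 1 - 1) * (s + t) := by
      rw [← Real.rpow_add_one hp.ne']; congr 1; ring
    have h0 : 0 ≤ (s + t) ^ (-((k : ℝ) / 2) - 1 - 1) := by positivity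
    simp only [h1]
    have : 4 * (-((k:ℝ) / 2) * ((-((k:ℝ) / 2) - 1) * (s + t) ^ (-((k:ℝ) / 2) - 1 - 1))) * s +
      2 * (-((k:ℝ) / 2) * ((s + t) ^ (-((k:ℝ) / 2) - 1 - 1) * (s + t))) * (k + 2) =
      - (k * (k + 2) * t * (s + t) ^ (-((k:ℝ) / 2) - 1 - 1)) := by ring
    rw [this]
    have : 0 ≤ k * (k + 2) * t * (s + t) ^ (-((k:ℝ) / 2) - 1 - 1) := by positivity
    linarith
  · refine ContDiff.rpow_const_of_ne (((contDiff_id.sub contDiff_const).norm_sq ℝ).add contDiff_const) fun z => ?_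
    positivity

lemma adm_log {n : ℕ} {t C : ℝ} (ht : 0 < t) (y : En n) :
    Adm 0 (fun z : En n => C - Real.log (‖z - y‖ ^ 2 + t)) := by
  refine adm_radial (l := fun s => C - Real.log (s + t)) (l1 := fun s => - (s + t)⁻¹)
    (l2 := fun s => ((s + t) ^ 2)⁻¹) ?_ ?_ ?_ ?_ y ?_
  · intro s hs
    have := (((hasDerivAt_id s).add_const t).log (by simp; positivity)).const_sub C
    simpa using this
  · intro s hs
    have := (((hasDerivAt_id s).add_const t).inv (by simp; positivity)).neg
    refine HasDerivAt.congr_deriv (f' := -(-1 / (s + t) ^ 2)) this ?_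
    rw [neg_div, neg_neg, one_div]
  · intro s hs; positivity
  · intro s hs
    have hp : 0 < s + t := by positivity
    have : 4 * ((s + t) ^ 2)⁻¹ * s + 2 * (-(s + t)⁻¹) * ((0:ℕ) + 2) = - (4 * t / (s + t) ^ 2) := by
      field_simp; push_cast; ring
    rw [this]
    have : 0 ≤ 4 * t / (s + t) ^ 2 := by positivity
    linarith
  · refine contDiff_const.sub (ContDiff.log (((contDiff_id.sub contDiff_const).norm_sq ℝ).add contDiff_const) fun z => ?_)
    positivity

lemma shell_sum {k : ℕ} (hk : 1 ≤ k) (N : ℕ) :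
    ∑ s ∈ Finset.range N, (1 : ℝ) / (s + 1) ≤
    ∑ m ∈ Fintype.piFinset (fun _ : Fin k => Finset.range N),
      ((((Finset.univ.sup m : ℕ) : ℝ) + 1) ^ k)⁻¹ := by
  classical
  induction N with
  | zero => simp; positivity
  | succ N ih =>
    rw [Finset.sum_range_succ]
    set P := Fintype.piFinset (fun _ : Fin k => Finset.range N)
    set Q := Fintype.piFinset (fun _ : Fin k => Finset.range (N + 1))
    have hPQ : P ⊆ Q := Fintype.piFinset_subset _ _ fun i => Finset.range_mono (by simp)
    rw [← Finset.sum_sdiff hPQ, add_comm]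
    refine add_le_add ?_ ih
    have h1 : ∀ m ∈ Q \ P, (((N : ℝ) + 1) ^ k)⁻¹ ≤
        ((((Finset.univ.sup m : ℕ) : ℝ) + 1) ^ k)⁻¹ := by
      intro m hm
      have hm' := Fintype.mem_piFinset.1 (Finset.mem_sdiff.1 hm).1
      have : Finset.univ.sup m ≤ N := Finset.sup_le fun i _ => by
        have := Finset.mem_range.1 (hm' i); omega
      gcongr
    refine le_trans ?_ (Finset.card_nsmul_le_sum _ _ _ h1)
    rw [nsmul_eq_mul, Finset.card_sdiff_of_subset hPQ, Nat.cast_sub (Finset.card_le_card hPQ)]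
    simp only [P, Q, Fintype.card_piFinset, Finset.card_range, Finset.prod_const,
      Finset.card_univ, Fintype.card_fin]
    push_cast
    rw [← div_eq_mul_inv, sub_div, div_self (by positivity), ← div_pow]
    have h2 : ((N : ℝ) / (N + 1)) ^ k ≤ (N : ℝ) / (N + 1) := by
      refine pow_le_of_le_one (by positivity) ?_ (by omega)
      rw [div_le_one (by positivity)]; linarith
    have h3 : (1 : ℝ) / (N + 1) = 1 - N / (N + 1) := by field_simp; ring
    linarith

lemma sq_rpow_neg_half {A : ℝ} (hA : 0 < A) (k : ℕ) : (A ^ 2) ^ (-((k : ℝ) / 2)) = (A ^ k)⁻¹ := by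
  rw [Real.rpow_neg (by positivity), ← Real.rpow_natCast A 2, ← Real.rpow_mul hA.le,
    ← Real.rpow_natCast A k]
  congr 2
  push_cast; ring

set_option maxHeartbeats 1000000 in
lemma capacity_pos {n k : ℕ} (hk : 1 ≤ k) {E : Set (En n)} (hE : IsClosed E)
    {G : (Fin k → ℝ) → En n} {x₀ : En n} {ρ b L : ℝ} (hb : 0 < b) (hL : 0 ≤ L)
    (hG : ∀ w ∈ closedBall (0 : Fin k → ℝ) (3 * b), G w ∈ E)
    (hGL : ∀ w ∈ closedBall (0 : Fin k → ℝ) (3 * b), ∀ w' ∈ closedBall (0 : Fin k → ℝ) (3 * b),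
        ‖G w - G w'‖ ≤ L * ‖w - w'‖)
    (hcov : ∀ y ∈ closedBall x₀ ρ ∩ E, ∃ w ∈ closedBall (0 : Fin k → ℝ) b, G w = y)
    {x : En n} (hx : x ∉ E) {η κ : ℝ} (hη : 0 < η) (hκ : 0 < κ) :
    ∃ ψ : En n → ℝ, Adm k ψ ∧ (∀ z ∈ closedBall x₀ ρ, 0 ≤ ψ z) ∧
      (∀ z ∈ closedBall x₀ ρ ∩ E, η ≤ ψ z) ∧ ψ x ≤ κ := by
  classical
  obtain ⟨d, hd, hdE⟩ := Metric.nhds_basis_ball.mem_iff.1 (hE.isOpen_compl.mem_nhds hx)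
  set s := √(L ^ 2 + 1) with hs
  have hs0 : 0 < s := by positivity
  have hs2 : s ^ 2 = L ^ 2 + 1 := Real.sq_sqrt (by positivity)
  set c₁ : ℝ := (s ^ k)⁻¹
  have hc₁ : 0 < c₁ := by positivity
  set c₂ : ℝ := (4 * b) ^ k * (d ^ k)⁻¹
  have hc₂ : 0 < c₂ := by positivity
  obtain ⟨N, hN1, hN⟩ : ∃ N : ℕ, 1 ≤ N ∧ η / κ * c₂ / c₁ ≤
      ∑ s ∈ Finset.range N, (1 : ℝ) / (s + 1) := by
    have := (Real.tendsto_sum_range_one_div_nat_succ_atTop.eventually_ge_atTop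
      (η / κ * c₂ / c₁)).and (eventually_ge_atTop 1)
    obtain ⟨N, h1, h2⟩ := this.exists
    exact ⟨N, h2, h1⟩
  set H := ∑ s ∈ Finset.range N, (1 : ℝ) / (s + 1)
  have hH : 0 < H := lt_of_lt_of_le (by positivity) hN
  have hNR : (0:ℝ) < N := by exact_mod_cast hN1
  set τ := 2 * b / N with hτ
  have hτ0 : 0 < τ := by positivity
  have hτN : τ * N = 2 * b := by rw [hτ]; field_simp
  set W : (Fin k → ℕ) → (Fin k → ℝ) := fun i j => -b + τ * i j with hW
  set T := Fintype.piFinset (fun _ : Fin k => Finset.range (2 * N))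
  have hWT : ∀ i ∈ T, W i ∈ closedBall (0 : Fin k → ℝ) (3 * b) := by
    intro i hi
    rw [mem_closedBall_zero_iff, pi_norm_le_iff_of_nonneg (by positivity)]
    intro j
    have h1 := Finset.mem_range.1 (Fintype.mem_piFinset.1 hi j)
    have h2 : (i j : ℝ) ≤ 2 * N := by exact_mod_cast h1.le
    have h3 : τ * i j ≤ 4 * b := by
      calc τ * i j ≤ τ * (2 * N) := by gcongr
        _ = 4 * b := by linarith
    have h4 : 0 ≤ τ * i j := by positivity
    rw [Real.norm_eq_abs, abs_le]
    simp only [hW]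
    constructor <;> linarith
  set Ψ : En n → ℝ := fun z =>
    ∑ i ∈ T, τ ^ k * (‖z - G (W i)‖ ^ 2 + τ ^ 2) ^ (-((k : ℝ) / 2)) with hΨ
  have hΨA : Adm k Ψ := Adm.sum fun i _ => (adm_pow (by positivity) _).const_mul (by positivity)
  have hΨ0 : ∀ z, 0 ≤ Ψ z := fun z => Finset.sum_nonneg fun i _ => by positivity
  have hup : Ψ x ≤ c₂ := by
    have : ∀ i ∈ T, τ ^ k * (‖x - G (W i)‖ ^ 2 + τ ^ 2) ^ (-((k : ℝ) / 2)) ≤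
        τ ^ k * (d ^ k)⁻¹ := by
      intro i hi
      have h1 : d ≤ ‖x - G (W i)‖ := by
        by_contra hcon
        push Not at hcon
        rw [← dist_eq_norm, dist_comm] at hcon
        exact hdE hcon (hG _ (hWT i hi))
      rw [← sq_rpow_neg_half hd]
      refine mul_le_mul_of_nonneg_left ?_ (by positivity)
      refine Real.rpow_le_rpow_of_nonpos (by positivity) ?_ (by simp; positivity)
      nlinarith
    refine (Finset.sum_le_card_nsmul _ _ _ this).trans (le_of_eq ?_)
    simp only [T, Fintype.card_piFinset, Finset.card_range, Finset.prod_const,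
      Finset.card_univ, Fintype.card_fin, nsmul_eq_mul, c₂]
    push_cast
    rw [← mul_assoc, ← mul_pow]
    congr 2
    linarith
  have hlow : ∀ z ∈ closedBall x₀ ρ ∩ E, c₁ * H ≤ Ψ z := by
    intro z hz
    obtain ⟨w, hw, rfl⟩ := hcov z hz
    have hw3 : w ∈ closedBall (0 : Fin k → ℝ) (3 * b) :=
      closedBall_subset_closedBall (by linarith) hw
    rw [mem_closedBall_zero_iff, pi_norm_le_iff_of_nonneg hb.le] at hw
    set i₀ : Fin k → ℕ := fun j => ⌊(w j + b) / τ⌋₊ with hi₀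
    have hwj : ∀ j, -b ≤ w j ∧ w j ≤ b := fun j => abs_le.1 (hw j)
    have hi₀1 : ∀ j, τ * i₀ j ≤ w j + b := by
      intro j
      have : (i₀ j : ℝ) ≤ (w j + b) / τ :=
        Nat.floor_le (div_nonneg (by linarith [hwj j]) hτ0.le)
      rw [le_div_iff₀ hτ0] at this
      linarith
    have hi₀2 : ∀ j, w j + b ≤ τ * i₀ j + τ := by
      intro j
      have : (w j + b) / τ < i₀ j + 1 := Nat.lt_floor_add_one _
      rw [div_lt_iff₀ hτ0] at this
      linarith
    have hi₀N : ∀ j, i₀ j ≤ N := by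
      intro j
      have : τ * i₀ j ≤ τ * N := by linarith [hi₀1 j, (hwj j).2]
      exact_mod_cast le_of_mul_le_mul_left this hτ0
    set P := Fintype.piFinset (fun _ : Fin k => Finset.range N)
    have hsub : P.image (fun m => i₀ + m) ⊆ T := by
      intro i hi
      obtain ⟨m, hm, rfl⟩ := Finset.mem_image.1 hi
      refine Fintype.mem_piFinset.2 fun j => ?_
      have h1 := Finset.mem_range.1 (Fintype.mem_piFinset.1 hm j)
      have h2 := hi₀N j
      simp only [Finset.mem_range, Pi.add_apply]
      omega
    calc c₁ * H ≤ c₁ * ∑ m ∈ P, ((((Finset.univ.sup m : ℕ) : ℝ) + 1) ^ k)⁻¹ := by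
          gcongr; exact shell_sum hk N
      _ = ∑ m ∈ P, c₁ * ((((Finset.univ.sup m : ℕ) : ℝ) + 1) ^ k)⁻¹ := by rw [Finset.mul_sum]
      _ ≤ ∑ m ∈ P, τ ^ k * (‖G w - G (W (i₀ + m))‖ ^ 2 + τ ^ 2) ^ (-((k : ℝ) / 2)) := by
          refine Finset.sum_le_sum fun m hm => ?_
          set S : ℝ := ((Finset.univ.sup m : ℕ) : ℝ) + 1 with hS
          have hS1 : 1 ≤ S := by simp [hS]
          have hT : i₀ + m ∈ T := hsub (Finset.mem_image_of_mem _ hm)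
          have h1 : ‖w - W (i₀ + m)‖ ≤ τ * S := by
            rw [pi_norm_le_iff_of_nonneg (by positivity)]
            intro j
            have h2 : (m j : ℝ) ≤ S - 1 := by
              have : m j ≤ Finset.univ.sup m := Finset.le_sup (Finset.mem_univ j)
              simp only [hS, add_sub_cancel_right]
              exact_mod_cast this
            have h3 : τ * m j ≤ τ * S - τ := by nlinarith
            have h4 : 0 ≤ τ * m j := by positivity
            have h5 : τ ≤ τ * S := by nlinarith
            simp only [hW, Pi.sub_apply, Pi.add_apply, Real.norm_eq_abs]
            push_cast
            rw [abs_le]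
            constructor <;> nlinarith [hi₀1 j, hi₀2 j]
          have h2 : ‖G w - G (W (i₀ + m))‖ ≤ L * (τ * S) :=
            (hGL w hw3 _ (hWT _ hT)).trans (by gcongr)
          have h3 : ‖G w - G (W (i₀ + m))‖ ^ 2 + τ ^ 2 ≤ (s * (τ * S)) ^ 2 := by
            have h4 : ‖G w - G (W (i₀ + m))‖ ^ 2 ≤ (L * (τ * S)) ^ 2 := by gcongr
            have h5 : τ ^ 2 ≤ (τ * S) ^ 2 := by
              have : τ ≤ τ * S := by nlinarith
              gcongr
            rw [mul_pow s, hs2]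
            nlinarith
          calc c₁ * (S ^ k)⁻¹ = τ ^ k * ((s * (τ * S)) ^ 2) ^ (-((k : ℝ) / 2)) := by
                rw [sq_rpow_neg_half (by positivity)]
                simp only [c₁]
                field_simp
                rw [mul_pow, mul_pow]; ring
            _ ≤ _ := by
                refine mul_le_mul_of_nonneg_left ?_ (by positivity)
                exact Real.rpow_le_rpow_of_nonpos (by positivity) h3 (by simp; positivity)
      _ = ∑ i ∈ P.image (fun m => i₀ + m),
            τ ^ k * (‖G w - G (W i)‖ ^ 2 + τ ^ 2) ^ (-((k : ℝ) / 2)) := by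
          rw [Finset.sum_image]
          intro a _ b _ hab
          exact add_left_cancel hab
      _ ≤ Ψ (G w) := Finset.sum_le_sum_of_subset_of_nonneg hsub fun i _ _ => by positivity
  rw [div_le_iff₀ hc₁] at hN
  clear_value Ψ c₁ c₂ H
  clear hWT hW hτN hG hGL hcov
  have hq : 0 < κ / c₂ := div_pos hκ hc₂
  refine ⟨fun z => (κ / c₂) * Ψ z, hΨA.const_mul hq.le, ?_, ?_, ?_⟩
  · intro z _
    exact mul_nonneg hq.le (hΨ0 z)
  · intro z hz
    have h1 := hlow z hz
    have h2 : η / κ * c₂ ≤ Ψ z := by linarith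
    have h3 := mul_le_mul_of_nonneg_left h2 hq.le
    have h4 : κ / c₂ * (η / κ * c₂) = η := by field_simp
    rw [h4] at h3
    exact h3
  · have h3 := mul_le_mul_of_nonneg_left hup hq.le
    rw [div_mul_cancel₀ _ hc₂.ne'] at h3
    exact h3

lemma capacity_zero {n : ℕ} {E : Set (En n)}
    {x₀ : En n} {ρ : ℝ} (hx₀ : x₀ ∈ E) (hcov : ∀ y ∈ closedBall x₀ ρ ∩ E, y = x₀)
    {x : En n} (hx : x ∉ E) {η κ : ℝ} (hη : 0 < η) (hκ : 0 < κ) :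
    ∃ ψ : En n → ℝ, Adm 0 ψ ∧ (∀ z ∈ closedBall x₀ ρ, 0 ≤ ψ z) ∧
      (∀ z ∈ closedBall x₀ ρ ∩ E, η ≤ ψ z) ∧ ψ x ≤ κ := by
  have hne : x ≠ x₀ := fun h => hx (h ▸ hx₀)
  have hD : 0 < ‖x - x₀‖ ^ 2 := by have := norm_pos_iff.2 (sub_ne_zero.2 hne); positivity
  set C := Real.log (ρ ^ 2 + 1) with hC
  have hC0 : 0 ≤ C := Real.log_nonneg (by nlinarith [sq_nonneg ρ])
  set Λ := C - Real.log (‖x - x₀‖ ^ 2)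
  set c := κ / (|Λ| + 1) with hc
  have hc0 : 0 < c := by positivity
  set t := Real.exp (-(η / c)) with ht
  have ht0 : 0 < t := Real.exp_pos _
  have ht1 : t ≤ 1 := Real.exp_le_one_iff.2 (by simp; positivity)
  refine ⟨fun z => c * (C - Real.log (‖z - x₀‖ ^ 2 + t)), (adm_log ht0 x₀).const_mul hc0.le,
    ?_, ?_, ?_⟩
  · intro z hz
    have h1 : ‖z - x₀‖ ≤ ρ := by rw [← dist_eq_norm]; exact hz
    have : Real.log (‖z - x₀‖ ^ 2 + t) ≤ C := by
      apply Real.log_le_log (by positivity)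
      gcongr
    exact mul_nonneg hc0.le (by linarith)
  · intro z hz
    rw [hcov z hz]
    simp only [sub_self, norm_zero, ne_eq, OfNat.ofNat_ne_zero, not_false_eq_true, zero_pow,
      zero_add, ht, Real.log_exp]
    calc η = c * (η / c) := by field_simp
      _ ≤ c * (C - -(η / c)) := by gcongr; linarith
  · have h1 : Real.log (‖x - x₀‖ ^ 2) ≤ Real.log (‖x - x₀‖ ^ 2 + t) :=
      Real.log_le_log hD (by linarith)
    have h2 : C - Real.log (‖x - x₀‖ ^ 2 + t) ≤ |Λ| + 1 := by
      have := le_abs_self Λ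
      simp only [Λ] at this ⊢
      linarith
    calc c * (C - Real.log (‖x - x₀‖ ^ 2 + t)) ≤ c * (|Λ| + 1) := by gcongr
      _ = κ := by rw [hc]; field_simp

lemma capacity {n k : ℕ} {E : Set (En n)} (hE : IsSmoothClosedSubmanifold k E)
    {x₀ : En n} (hx₀ : x₀ ∈ E) :
    ∃ ρ₁ > 0, ∀ ρ ≤ ρ₁, ∀ x ∉ E, ∀ η κ : ℝ, 0 < η → 0 < κ →
    ∃ ψ : En n → ℝ, Adm k ψ ∧ (∀ z ∈ closedBall x₀ ρ, 0 ≤ ψ z) ∧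
      (∀ z ∈ closedBall x₀ ρ ∩ E, η ≤ ψ z) ∧ ψ x ≤ κ := by
  obtain ⟨G, ρ, b, L, hρ, hb, hL, hG, hGL, hcov⟩ := chart_param hE hx₀
  refine ⟨ρ, hρ, fun ρ' hρ' x hx η κ hη hκ => ?_⟩
  have hss : closedBall x₀ ρ' ⊆ closedBall x₀ ρ := closedBall_subset_closedBall hρ'
  rcases Nat.eq_zero_or_pos k with rfl | hk
  · refine capacity_zero hx₀ (fun y hy => ?_) hx hη hκ
    obtain ⟨w, -, hw⟩ := hcov y ⟨hss hy.1, hy.2⟩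
    obtain ⟨w', -, hw'⟩ := hcov x₀ ⟨mem_closedBall_self hρ.le, hx₀⟩
    rw [← hw, ← hw', Subsingleton.elim w w']
  · exact capacity_pos hk hE.1.isClosed hb hL hG hGL
      (fun y hy => hcov y ⟨hss hy.1, hy.2⟩) hx hη hκ

lemma contDiff_dist_sq {n : ℕ} (x₀ : En n) : ContDiff ℝ 2 (fun x : En n => ‖x - x₀‖ ^ 2) :=
  (contDiff_id.sub contDiff_const).norm_sq ℝ

lemma step_one {n : ℕ} {Ω E : Set (En n)} (hΩopen : IsOpen Ω) (hEc : IsClosed E)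
    {F : En n → ℝ → En n → Matrix (Fin n) (Fin n) ℝ → ℝ}
    (hFcont : ContinuousOn
      (fun q : En n × ℝ × En n × Matrix (Fin n) (Fin n) ℝ => F q.1 q.2.1 q.2.2.1 q.2.2.2)
      {q | q.1 ∈ Ω})
    {f : En n → ℝ} (hf : UpperSemicontinuousOn f Ω)
    {u : En n → ℝ} (hu : LowerSemicontinuousOn u (Ω \ E))
    (hvisc : IsViscositySupersolution F f (Ω \ E) u)
    {φ : En n → ℝ} (hφ : ContDiffOn ℝ 2 φ Ω)
    {x₀ : En n} (hx₀ : x₀ ∈ Ω)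
    (hlt : f x₀ < F x₀ (φ x₀) (gradient φ x₀) (hess φ x₀))
    {Φ : Fin n → En n → ℝ} {ρ₀ : ℝ} (hρ₀ : 0 < ρ₀) (hΦ : ∀ j, ContDiff ℝ 2 (Φ j))
    (hΦE : ∀ y ∈ closedBall x₀ ρ₀ ∩ E, ∀ j, Φ j y = 0)
    (hmin : ∀ᶠ x in 𝓝 x₀, x ∉ E → φ x ≤ u x) :
    ∃ δ > 0, ∃ R > 0, R ≤ ρ₀ ∧ closedBall x₀ R ⊆ Ω ∧ ∃ r > 0, ∀ p : Fin n → ℝ,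
      (∀ j, |p j| ≤ r) → ∀ x ∈ closedBall x₀ R \ E,
        φ x - δ * ‖x - x₀‖ ^ 2 + ∑ j, p j * Φ j x ≤ u x := by
  set q : Option (Option (Fin n)) → En n → ℝ := fun o => match o with
    | none => fun _ => 1
    | some none => fun x => ‖x - x₀‖ ^ 2
    | some (some j) => Φ j with hqdef
  have hq : ∀ o, ContDiff ℝ 2 (q o) := by
    intro o
    rcases o with _ | _ | j
    · exact contDiff_const
    · exact contDiff_dist_sq x₀
    · exact hΦ j
  obtain ⟨ε, hε, hpert⟩ := perturb hΩopen hFcont hf hφ hq hx₀ hlt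
  set δ := ε / 2 with hδ
  have hδ0 : 0 < δ := by positivity
  obtain ⟨R₁, hR₁, hR₁s⟩ := Metric.nhds_basis_closedBall.mem_iff.1
    (inter_mem (hΩopen.mem_nhds hx₀) hmin)
  set R := min R₁ (min ρ₀ δ) with hR
  have hR0 : 0 < R := by positivity
  have hRρ : R ≤ ρ₀ := (min_le_right _ _).trans (min_le_left _ _)
  have hRδ : R ≤ δ := (min_le_right _ _).trans (min_le_right _ _)
  have hRR : closedBall x₀ R ⊆ closedBall x₀ R₁ := closedBall_subset_closedBall (min_le_left _ _)
  have hB : closedBall x₀ R ⊆ Ω := fun x hx => (hR₁s (hRR hx)).1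
  have hφu : ∀ x ∈ closedBall x₀ R \ E, φ x ≤ u x := fun x hx => (hR₁s (hRR hx.1)).2 hx.2
  have hcont : Continuous fun x => ∑ j, |Φ j x| :=
    continuous_finsetSum _ fun j _ => (hΦ j).continuous.abs
  obtain ⟨B, hBd⟩ := (isCompact_closedBall x₀ R).bddAbove_image hcont.continuousOn
  have hBd' : ∀ x ∈ closedBall x₀ R, ∑ j, |Φ j x| ≤ B := fun x hx => hBd (mem_image_of_mem _ hx)
  have hB0 : 0 ≤ B := (Finset.sum_nonneg fun j _ => abs_nonneg _).trans
    (hBd' x₀ (mem_closedBall_self hR0.le))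
  set m := min (δ * R ^ 2) δ with hm
  have hm0 : 0 < m := by positivity
  set r := min δ (m / (B + 1)) with hr
  have hr0 : 0 < r := by positivity
  have hrB : r * B ≤ m := by
    calc r * B ≤ m / (B + 1) * (B + 1) := by
          gcongr
          · exact min_le_right _ _
          · linarith
      _ = m := by field_simp
  refine ⟨δ, hδ0, R, hR0, hRρ, hB, r, hr0, fun p hp => ?_⟩
  have hpΦ : ∀ x ∈ closedBall x₀ R, ∑ j, p j * Φ j x ≤ m := by
    intro x hx
    calc ∑ j, p j * Φ j x ≤ ∑ j, r * |Φ j x| := by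
          refine Finset.sum_le_sum fun j _ => ?_
          calc p j * Φ j x ≤ |p j * Φ j x| := le_abs_self _
            _ = |p j| * |Φ j x| := abs_mul _ _
            _ ≤ _ := by gcongr; exact hp j
      _ = r * ∑ j, |Φ j x| := by rw [Finset.mul_sum]
      _ ≤ r * B := by gcongr; exact hBd' x hx
      _ ≤ m := hrB
  have hsumc : Continuous fun x => ∑ j, p j * Φ j x :=
    continuous_finsetSum _ fun j _ => continuous_const.mul (hΦ j).continuous
  have hdc : Continuous fun x => δ * ‖x - x₀‖ ^ 2 := by fun_prop
  have hT1 : ∀ x ∈ closedBall x₀ R \ E, δ * ‖x - x₀‖ ^ 2 - ∑ j, p j * Φ j x ≤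
      u x - (φ x - δ * ‖x - x₀‖ ^ 2 + ∑ j, p j * Φ j x) := by
    intro x hx
    have := hφu x hx
    linarith
  have hT2 : ∀ x ∈ closedBall x₀ R ∩ E, 0 ≤ δ * ‖x - x₀‖ ^ 2 - ∑ j, p j * Φ j x := by
    intro x hx
    have h1 := hΦE x ⟨closedBall_subset_closedBall hRρ hx.1, hx.2⟩
    simp only [h1, mul_zero, Finset.sum_const_zero, sub_zero]
    positivity
  have hT3 : ∀ x ∈ sphere x₀ R, 0 ≤ δ * ‖x - x₀‖ ^ 2 - ∑ j, p j * Φ j x := by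
    intro x hx
    have h1 := hpΦ x (sphere_subset_closedBall hx)
    have h2 : ‖x - x₀‖ = R := by rw [← dist_eq_norm]; exact hx
    have h3 : m ≤ δ * R ^ 2 := min_le_left _ _
    rw [h2]
    linarith
  rcases touch hu hB (θ := fun x => φ x - δ * ‖x - x₀‖ ^ 2 + ∑ j, p j * Φ j x)
    (h := fun x => δ * ‖x - x₀‖ ^ 2 - ∑ j, p j * Φ j x)
    (((hφ.continuousOn.mono hB).sub hdc.continuousOn).add hsumc.continuousOn)
    (hdc.sub hsumc).continuousOn hT1 hT2 hT3 with h | ⟨y, hy, hy0, hymin⟩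
  · exact h
  · exfalso
    set c := u y - (φ y - δ * ‖y - x₀‖ ^ 2 + ∑ j, p j * Φ j y) with hc
    have hyB : y ∈ closedBall x₀ R := ball_subset_closedBall hy.1
    set a : Option (Option (Fin n)) → ℝ := fun o => match o with
      | none => c
      | some none => -δ
      | some (some j) => p j with ha
    have hcl : -δ ≤ c := by
      have h1 := hφu y ⟨hyB, hy.2⟩
      have h2 := hpΦ y hyB
      have h3 : m ≤ δ := min_le_right _ _
      have h4 : 0 ≤ δ * ‖y - x₀‖ ^ 2 := by positivity
      linarith
    have hεδ : δ < ε := by rw [hδ]; linarith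
    have han : ‖a‖ < ε := by
      rw [pi_norm_lt_iff hε]
      intro o
      rcases o with _ | _ | j
      · show |c| < ε
        rw [abs_lt]; constructor <;> linarith
      · show |-δ| < ε
        rw [abs_neg, abs_of_pos hδ0]; exact hεδ
      · show |p j| < ε
        exact ((hp j).trans (min_le_left _ _)).trans_lt hεδ
    have hyε : y ∈ ball x₀ ε := by
      have := hy.1
      rw [mem_ball] at this ⊢
      linarith
    have h1 := hpert a han y hyε
    have hsum : ∀ x, φ x + ∑ o, a o * q o x =
        φ x - δ * ‖x - x₀‖ ^ 2 + ∑ j, p j * Φ j x + c := by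
      intro x
      rw [Fintype.sum_option, Fintype.sum_option]
      simp only [ha, hqdef]
      ring
    have hC : ContDiffOn ℝ 2 (fun x => φ x + ∑ o, a o * q o x) (Ω \ E) :=
      (hφ.mono sdiff_subset).add
        (ContDiff.sum fun o _ => contDiff_const.mul (hq o)).contDiffOn
    have h2 := hvisc _ hC y ⟨hB hyB, hy.2⟩ (by simp only [hsum]; rw [hc]; ring) ?_
    · exact absurd h1 (not_lt.2 h2)
    · have hnb : ball x₀ R ∈ 𝓝 y := isOpen_ball.mem_nhds hy.1
      filter_upwards [mem_nhdsWithin_of_mem_nhds hnb, self_mem_nhdsWithin] with x hx hxE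
      have := hymin x ⟨ball_subset_closedBall hx, hxE.2⟩
      simp only [hsum]
      linarith

lemma D2_sq {n : ℕ} {g : En n → ℝ} (hg : ContDiff ℝ 2 g) {x : En n} (hx : g x = 0)
    (v : En n) : D2 (fun z => g z ^ 2) x v v = 2 * (fderiv ℝ g x v) ^ 2 := by
  have hd : Differentiable ℝ g := hg.differentiable (by norm_num)
  have h1 : fderiv ℝ (fun z => g z ^ 2) = fun z => (2 * g z) • fderiv ℝ g z := by
    ext1 z
    have := ((hd z).hasFDerivAt.pow 2).fderiv
    simpa using this
  have hd2 : Differentiable ℝ (fderiv ℝ g) :=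
    (hg.fderiv_right (m := 1) (by norm_num)).differentiable (by norm_num)
  rw [D2_eq, h1, (((hd x).hasFDerivAt.const_mul 2).fun_smul (hd2 x).hasFDerivAt).fderiv]
  simp [hx]
  ring

lemma D2_const_add {n : ℕ} (C : ℝ) (g : En n → ℝ) (x v w : En n) :
    D2 (fun z => C + g z) x v w = D2 g x v w := by
  have : fderiv ℝ (fun z => C + g z) = fderiv ℝ g := by
    ext1 z; exact fderiv_const_add C
  rw [D2_eq, D2_eq, this]

lemma isCompact_frames (n m : ℕ) : IsCompact {v : Fin m → En n | Orthonormal ℝ v} := by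
  refine Metric.isCompact_of_isClosed_isBounded ?_ ?_
  · simp only [orthonormal_iff_ite, ofPred_forall]
    refine isClosed_iInter fun i => isClosed_iInter fun j => isClosed_eq ?_ continuous_const
    fun_prop
  · refine Metric.isBounded_closedBall (x := (0 : Fin m → En n)) (r := 1) |>.subset ?_
    intro v hv
    rw [mem_closedBall_zero_iff, pi_norm_le_iff_of_nonneg zero_le_one]
    exact fun i => (hv.1 i).le

lemma step_two {n m : ℕ} {x₀ : En n} {g : En n → ℝ} (hg : ContDiffAt ℝ 2 g x₀)
    {Φ : Fin n → En n → ℝ} (hΦ : ∀ j, ContDiff ℝ 2 (Φ j)) (hΦ0 : ∀ j, Φ j x₀ = 0)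
    (hnd : ∀ v : Fin m → En n, LinearIndependent ℝ v → ∃ i j, fderiv ℝ (Φ j) x₀ (v i) ≠ 0) :
    ∃ A > 0, ∀ᶠ x in 𝓝 x₀, ∀ v : Fin m → En n, Orthonormal ℝ v →
      0 < ∑ i, D2 (fun x => g x + A * ∑ j, Φ j x ^ 2) x (v i) (v i) := by
  set S := {v : Fin m → En n | Orthonormal ℝ v} with hS
  have hSc : IsCompact S := isCompact_frames n m
  set α : (Fin m → En n) → ℝ := fun v => ∑ i, D2 g x₀ (v i) (v i) with hα
  set β : (Fin m → En n) → ℝ := fun v => ∑ i, ∑ j, (fderiv ℝ (Φ j) x₀ (v i)) ^ 2 with hβ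
  have hαc : Continuous α := by
    simp only [hα, D2_eq]
    fun_prop
  have hβc : Continuous β := by
    simp only [hβ]
    fun_prop
  have hβ0 : ∀ v ∈ S, 0 < β v := by
    intro v hv
    obtain ⟨i, j, hij⟩ := hnd v hv.linearIndependent
    refine Finset.sum_pos' (fun i _ => Finset.sum_nonneg fun j _ => sq_nonneg _)
      ⟨i, Finset.mem_univ _, Finset.sum_pos' (fun j _ => sq_nonneg _) ⟨j, Finset.mem_univ _, ?_⟩⟩
    positivity
  obtain ⟨A, hA, hAS⟩ : ∃ A > 0, ∀ v ∈ S, 0 < α v + A * (2 * β v) := by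
    rcases S.eq_empty_or_nonempty with h | h
    · exact ⟨1, one_pos, by simp [h]⟩
    · obtain ⟨v₁, hv₁, hmin₁⟩ := hSc.exists_isMinOn h hαc.continuousOn
      obtain ⟨v₂, hv₂, hmin₂⟩ := hSc.exists_isMinOn h hβc.continuousOn
      have hb := hβ0 v₂ hv₂
      refine ⟨(|α v₁| + 1) / (2 * β v₂), by positivity, fun v hv => ?_⟩
      have h1 : α v₁ ≤ α v := hmin₁ hv
      have h2 : β v₂ ≤ β v := hmin₂ hv
      have h3 : |α v₁| + 1 ≤ (|α v₁| + 1) / (2 * β v₂) * (2 * β v) := by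
        calc |α v₁| + 1 = (|α v₁| + 1) / (2 * β v₂) * (2 * β v₂) := by field_simp
          _ ≤ _ := by gcongr
      have h4 := neg_abs_le (α v₁)
      linarith
  refine ⟨A, hA, ?_⟩
  have hsqC : ContDiff ℝ 2 (fun x => ∑ j, Φ j x ^ 2) := ContDiff.sum fun j _ => (hΦ j).pow 2
  set G := fun x => g x + A * ∑ j, Φ j x ^ 2 with hG
  have hGC : ContDiffAt ℝ 2 G x₀ := hg.add (contDiffAt_const.mul hsqC.contDiffAt)
  have hval : ∀ v ∈ S, 0 < ∑ i, D2 G x₀ (v i) (v i) := by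
    intro v hv
    have : ∑ i, D2 G x₀ (v i) (v i) = α v + A * (2 * β v) := by
      simp only [hα, hβ, Finset.mul_sum, ← Finset.sum_add_distrib]
      refine Finset.sum_congr rfl fun i _ => ?_
      rw [hG, D2_add hg (contDiffAt_const.mul hsqC.contDiffAt), D2_const_mul hsqC.contDiffAt,
        D2_sum fun j _ => ((hΦ j).pow 2).contDiffAt, Finset.mul_sum]
      congr 1
      exact Finset.sum_congr rfl fun j _ => by rw [D2_sq (hΦ j) (hΦ0 j)]
    rw [this]; exact hAS v hv
  have hDc : ContinuousAt (fderiv ℝ (fderiv ℝ G)) x₀ :=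
    ((hGC.fderiv_right (m := 1) (by norm_num)).fderiv_right (m := 0) (by norm_num)).continuousAt
  refine hSc.eventually_forall_of_forall_eventually fun v hv => ?_
  have hjc : ContinuousAt (fun z : En n × (Fin m → En n) => ∑ i, D2 G z.1 (z.2 i) (z.2 i))
      (x₀, v) := by
    simp only [D2_eq]
    have h1 : ContinuousAt (fun z : En n × (Fin m → En n) => fderiv ℝ (fderiv ℝ G) z.1)
      (x₀, v) := ContinuousAt.comp (f := Prod.fst) hDc continuousAt_fst
    have h2 : ∀ i, ContinuousAt (fun z : En n × (Fin m → En n) => z.2 i) (x₀, v) := fun i => by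
      fun_prop
    exact tendsto_finsetSum _ fun i _ => (h1.clm_apply (h2 i)).clm_apply (h2 i)
  exact hjc.eventually (lt_mem_nhds (hval v hv))

lemma step_three {n k : ℕ} (hkn : k + 2 ≤ n) {Ω E : Set (En n)} (hΩopen : IsOpen Ω)
    (hE : IsSmoothClosedSubmanifold k E)
    {u : En n → ℝ} (hu : LowerSemicontinuousOn u (Ω \ E))
    (heig : IsViscositySupersolution
      (fun _ _ _ M => sumSmallestEigs (k + 2) M) (fun _ => 0) (Ω \ E) u)
    {φ : En n → ℝ} (hφ : ContDiffOn ℝ 2 φ Ω)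
    {x₀ : En n} (hx₀ : x₀ ∈ Ω) (hx₀E : x₀ ∈ E)
    {Φ : Fin n → En n → ℝ} (hΦ : ∀ j, ContDiff ℝ 2 (Φ j)) {δ R r : ℝ} (hδ : 0 < δ) (hR : 0 < R)
    (hr : 0 < r) (hRΩ : closedBall x₀ R ⊆ Ω)
    (hΦE : ∀ y ∈ closedBall x₀ R ∩ E, ∀ j, Φ j y = 0)
    (hnd : ∀ v : Fin (k + 2) → En n, LinearIndependent ℝ v →
      ∃ i j, fderiv ℝ (Φ j) x₀ (v i) ≠ 0)
    (h1 : ∀ p : Fin n → ℝ, (∀ j, |p j| ≤ r) → ∀ x ∈ closedBall x₀ R \ E,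
        φ x - δ * ‖x - x₀‖ ^ 2 + ∑ j, p j * Φ j x ≤ u x) :
    ∃ η > 0, ∃ g : En n → ℝ, ContinuousAt g x₀ ∧ g x₀ = φ x₀ ∧
      ∀ᶠ x in 𝓝 x₀, x ∉ E → g x + η ≤ u x := by
  have hΦ0 : ∀ j, Φ j x₀ = 0 := hΦE x₀ ⟨mem_closedBall_self hR.le, hx₀E⟩
  have hg₁ : ContDiffOn ℝ 2 (fun x => φ x - 2 * δ * ‖x - x₀‖ ^ 2) Ω :=
    hφ.sub (contDiff_const.mul (contDiff_dist_sq x₀)).contDiffOn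
  obtain ⟨A, hA, hAe⟩ := step_two (hg₁.contDiffAt (hΩopen.mem_nhds hx₀)) hΦ hΦ0 hnd
  obtain ⟨ρ₁, hρ₁, hcap⟩ := capacity hE hx₀E
  have hsmall : ∀ᶠ x in 𝓝 x₀, ∀ j, |A * Φ j x| ≤ r := by
    rw [eventually_all]
    intro j
    have hc : ContinuousAt (fun x => |A * Φ j x|) x₀ :=
      (continuous_const.mul (hΦ j).continuous).abs.continuousAt
    have : |A * Φ j x₀| < r := by rw [hΦ0 j, mul_zero, abs_zero]; exact hr
    exact (hc.eventually (gt_mem_nhds this)).mono fun x hx => hx.le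
  obtain ⟨ρ₂, hρ₂, hρ₂s⟩ := Metric.nhds_basis_closedBall.mem_iff.1 (hAe.and hsmall)
  set ρ := min R (min ρ₁ ρ₂) with hρ
  have hρ0 : 0 < ρ := by positivity
  have hρR : closedBall x₀ ρ ⊆ closedBall x₀ R := closedBall_subset_closedBall (min_le_left _ _)
  have hρρ₂ : closedBall x₀ ρ ⊆ closedBall x₀ ρ₂ :=
    closedBall_subset_closedBall ((min_le_right _ _).trans (min_le_right _ _))
  have hρρ₁ : ρ ≤ ρ₁ := (min_le_right _ _).trans (min_le_left _ _)
  have hρΩ := hρR.trans hRΩ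
  have hlow : ∀ x ∈ closedBall x₀ ρ \ E,
      φ x - δ * ‖x - x₀‖ ^ 2 + A * ∑ j, Φ j x ^ 2 ≤ u x := by
    intro x hx
    have h2 := h1 (fun j => A * Φ j x) (hρ₂s (hρρ₂ hx.1)).2 x ⟨hρR hx.1, hx.2⟩
    have h3 : ∑ j, A * Φ j x * Φ j x = A * ∑ j, Φ j x ^ 2 := by
      rw [Finset.mul_sum]; exact Finset.sum_congr rfl fun j _ => by ring
    rw [h3] at h2
    exact h2
  have hsqC : ContDiff ℝ 2 (fun x => ∑ j, Φ j x ^ 2) := ContDiff.sum fun j _ => (hΦ j).pow 2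
  set g := fun x => φ x - 2 * δ * ‖x - x₀‖ ^ 2 + A * ∑ j, Φ j x ^ 2 with hg
  have hgC : ContDiffOn ℝ 2 g Ω := hg₁.add (contDiff_const.mul hsqC).contDiffOn
  have hgpos : ∀ x ∈ closedBall x₀ ρ, ∀ v : Fin (k + 2) → En n, Orthonormal ℝ v →
      0 < ∑ i, D2 g x (v i) (v i) := fun x hx => (hρ₂s (hρρ₂ hx)).1
  have hlow' : ∀ x ∈ closedBall x₀ ρ \ E, g x + δ * ‖x - x₀‖ ^ 2 ≤ u x := by
    intro x hx
    have := hlow x hx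
    simp only [hg]
    linarith
  clear_value g
  set η := δ * ρ ^ 2 with hη
  have hη0 : 0 < η := by positivity
  have hdc : Continuous fun x => δ * ‖x - x₀‖ ^ 2 := by fun_prop
  have hcomp : ∀ ψ : En n → ℝ, Adm k ψ → (∀ z ∈ closedBall x₀ ρ, 0 ≤ ψ z) →
      (∀ z ∈ closedBall x₀ ρ ∩ E, η ≤ ψ z) →
      ∀ x ∈ closedBall x₀ ρ \ E, g x + (η + (-1) * ψ x) ≤ u x := by
    intro ψ hψ hψ0 hψη
    have hψC : ContDiff ℝ 2 (fun x => (-1) * ψ x) := contDiff_const.mul hψ.1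
    have hT1 : ∀ x ∈ closedBall x₀ ρ \ E, δ * ‖x - x₀‖ ^ 2 - (η + (-1) * ψ x) ≤
        u x - (g x + (η + (-1) * ψ x)) := by
      intro x hx
      have := hlow' x hx
      linarith
    have hT2 : ∀ x ∈ closedBall x₀ ρ ∩ E, 0 ≤ δ * ‖x - x₀‖ ^ 2 - (η + (-1) * ψ x) := by
      intro x hx
      have := hψη x hx
      have h3 : 0 ≤ δ * ‖x - x₀‖ ^ 2 := by positivity
      linarith
    have hT3 : ∀ x ∈ sphere x₀ ρ, 0 ≤ δ * ‖x - x₀‖ ^ 2 - (η + (-1) * ψ x) := by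
      intro x hx
      have h2 : ‖x - x₀‖ = ρ := by rw [← dist_eq_norm]; exact hx
      have h3 := hψ0 x (sphere_subset_closedBall hx)
      rw [h2]
      linarith
    rcases touch hu hρΩ (θ := fun x => g x + (η + (-1) * ψ x))
      (h := fun x => δ * ‖x - x₀‖ ^ 2 - (η + (-1) * ψ x))
      ((hgC.continuousOn.mono hρΩ).add (continuous_const.add hψC.continuous).continuousOn)
      (hdc.sub (continuous_const.add hψC.continuous)).continuousOn hT1 hT2 hT3
      with h | ⟨y, hy, hy0, hymin⟩
    · exact h
    · exfalso
      have hyB : y ∈ closedBall x₀ ρ := ball_subset_closedBall hy.1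
      have hyΩ : y ∈ Ω := hρΩ hyB
      set c := u y - (g y + (η + (-1) * ψ y)) with hc
      have hθC : ContDiffOn ℝ 2 (fun x => (η + c) + (g x + (-1) * ψ x)) Ω :=
        contDiffOn_const.add (hgC.add hψC.contDiffOn)
      have h2 := heig _ (hθC.mono sdiff_subset) y ⟨hyΩ, hy.2⟩ (by rw [hc]; ring) (by
        have hnb : ball x₀ ρ ∈ 𝓝 y := isOpen_ball.mem_nhds hy.1
        filter_upwards [mem_nhdsWithin_of_mem_nhds hnb, self_mem_nhdsWithin] with x hx hxE
        have := hymin x ⟨ball_subset_closedBall hx, hxE.2⟩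
        linarith)
      have hΩy := hΩopen.mem_nhds hyΩ
      obtain ⟨v, hv, hvs⟩ := exists_frame hkn _ (hess_isHermitian (hθC.contDiffAt hΩy)) h2
      simp only [hess_quad, D2_const_add] at hvs
      have h3 : ∀ i, D2 (fun x => g x + (-1) * ψ x) y (v i) (v i) =
          D2 g y (v i) (v i) + (-1) * D2 ψ y (v i) (v i) := fun i => by
        rw [D2_add (hgC.contDiffAt hΩy) hψC.contDiffAt, D2_const_mul hψ.1.contDiffAt]
      simp only [h3] at hvs
      rw [Finset.sum_add_distrib, ← Finset.mul_sum] at hvs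
      have h4 := hψ.2 y v hv
      have h5 := hgpos y hyB v hv
      linarith
  refine ⟨η, hη0, g, (hgC.contDiffAt (hΩopen.mem_nhds hx₀)).continuousAt, ?_, ?_⟩
  · rw [hg]; simp [hΦ0]
  · filter_upwards [closedBall_mem_nhds x₀ hρ0] with x hx hxE
    refine le_of_forall_pos_le_add fun κ hκ => ?_
    obtain ⟨ψ, hψ, hψ0, hψη, hψx⟩ := hcap ρ hρρ₁ x hxE η κ hη0 hκ
    have := hcomp ψ hψ hψ0 hψη x ⟨hx, hxE⟩
    linarith

/-- **Corollary 1.1.** A viscosity supersolution `u` of a degenerate elliptic equation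
outside a smooth closed `k`-dimensional submanifold `E ⊂ Ω` (`0 ≤ k ≤ n-2`), bounded
below and satisfying `λ₁(∇²u) + ⋯ + λ_{k+2}(∇²u) ≤ 0` in `Ω \ E` in the viscosity sense,
extends (by `liminf`) to a viscosity supersolution in all of `Ω`. -/
theorem removable_submanifold_singularity_eigenvalue
    {n : ℕ} (hn : 2 ≤ n) (Ω : Set (En n))
    (hΩopen : IsOpen Ω) (hΩconn : IsConnected Ω) (hΩbdd : Bornology.IsBounded Ω)
    (F : En n → ℝ → En n → Matrix (Fin n) (Fin n) ℝ → ℝ)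
    (hFcont : ContinuousOn
      (fun q : En n × ℝ × En n × Matrix (Fin n) (Fin n) ℝ => F q.1 q.2.1 q.2.2.1 q.2.2.2)
      {q | q.1 ∈ Ω})
    (hFell : DegenerateElliptic Ω F)
    (k : ℕ) (hk : k ≤ n - 2)
    (E : Set (En n)) (hEΩ : E ⊆ Ω) (hE : IsSmoothClosedSubmanifold k E)
    (f : En n → ℝ) (hf : UpperSemicontinuousOn f Ω)
    (u : En n → ℝ) (hu : LowerSemicontinuousOn u (Ω \ E))
    (hubd : BddBelow (u '' (Ω \ E)))
    (heig : IsViscositySupersolution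
      (fun _ _ _ M => sumSmallestEigs (k + 2) M) (fun _ => 0) (Ω \ E) u)
    (hvisc : IsViscositySupersolution F f (Ω \ E) u) :
    ERealIsViscositySupersolution F f Ω (liminfExtension Ω E u) := by
  intro φ hφ x₀ hx₀ hval hmin
  have hEc : IsClosed E := hE.1.isClosed
  have hmin' : ∀ᶠ x in 𝓝 x₀, x ∉ E → φ x ≤ u x := by
    rw [hΩopen.nhdsWithin_eq hx₀] at hmin
    filter_upwards [hmin] with x hx hxE
    simp only [liminfExtension, if_neg hxE] at hx
    exact_mod_cast hx
  by_cases hx₀E : x₀ ∈ E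
  · by_contra hcon
    push Not at hcon
    obtain ⟨Φ, ρ₀, hρ₀, hΦ, hΦE, hnd⟩ := chart_normal hE hx₀E
    obtain ⟨δ, hδ, R, hR, hRρ, hRΩ, r, hr, h1⟩ :=
      step_one hΩopen hEc hFcont hf hu hvisc hφ hx₀ hcon hρ₀ hΦ hΦE hmin'
    obtain ⟨η, hη, g, hgc, hg0, hgu⟩ := step_three (by omega) hΩopen hE hu heig hφ hx₀ hx₀E hΦ
      hδ hR hr hRΩ (fun y hy => hΦE y ⟨closedBall_subset_closedBall hRρ hy.1, hy.2⟩) hnd h1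
    have hgl : ∀ᶠ x in 𝓝 x₀, φ x₀ - η / 2 < g x :=
      hgc.eventually (lt_mem_nhds (by rw [hg0]; linarith))
    have hlim : ((φ x₀ + η / 2 : ℝ) : EReal) ≤ liminfExtension Ω E u x₀ := by
      simp only [liminfExtension, if_pos hx₀E]
      refine le_liminf_of_le (by isBoundedDefault) ?_
      filter_upwards [mem_nhdsWithin_of_mem_nhds hgu, mem_nhdsWithin_of_mem_nhds hgl,
        self_mem_nhdsWithin] with x hx1 hx2 hx3
      have := hx1 hx3.2
      exact_mod_cast (by linarith : φ x₀ + η / 2 ≤ u x)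
    rw [hval] at hlim
    have : φ x₀ + η / 2 ≤ φ x₀ := by exact_mod_cast hlim
    linarith
  · simp only [liminfExtension, if_neg hx₀E] at hval
    have hval' : u x₀ = φ x₀ := by exact_mod_cast hval
    refine hvisc φ (hφ.mono sdiff_subset) x₀ ⟨hx₀, hx₀E⟩ hval' ?_
    filter_upwards [mem_nhdsWithin_of_mem_nhds hmin', self_mem_nhdsWithin] with x hx hxE
    have := hx hxE.2
    rw [hval']
    linarith
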